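/- Let 1 ≤ p, r < ∞ and 0 ≤ α, β < ∞. Define, for f ∈ L¹(𝕋) with Fourier coefficients {f_n}, the norm ‖f‖ = Σ_{k∈ℤ}|f_k| + (Σ_{k=1}^∞ |f_{−k}|^p (k+1)^{αp})^{1/p} + (Σ_{k=0}^∞ |f_k|^r (k+1)^{βr})^{1/r}. Then the set of f with ‖f‖ < ∞ is closed under pointwise multiplication, and there is a constant C (depending only on p, r, α, β) such that ‖fg‖ ≤ C·‖f‖·‖g‖ for all such f, g. -/

import Mathlib

open scoped ENNReal NNReal
open MeasureTheory

instance fact_two_pi_pos : Fact (0 < 2 * Real.pi) := ⟨Real.two_pi_pos⟩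

/-- The norm `‖f‖_W + ‖f‖_{Fℓ^{p,r}_{α,β}}`, computed from the Fourier
coefficient sequence `F` of `f`:
`Σ_{k∈ℤ}|F k| + (Σ_{k≥1} |F(-k)|^p (k+1)^{αp})^{1/p}
              + (Σ_{k≥0} |F k|^r (k+1)^{βr})^{1/r}`, valued in `[0,∞]`. -/
noncomputable def BSnorm (p r α β : ℝ) (F : ℤ → ℂ) : ℝ≥0∞ :=
  (∑' k : ℤ, (‖F k‖₊ : ℝ≥0∞)) +
  (∑' k : ℕ, (‖F (-((k : ℤ) + 1))‖₊ : ℝ≥0∞) ^ p * ((k : ℝ≥0∞) + 2) ^ (α * p)) ^ (1 / p) +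
  (∑' k : ℕ, (‖F (k : ℤ)‖₊ : ℝ≥0∞) ^ r * ((k : ℝ≥0∞) + 1) ^ (β * r)) ^ (1 / r)

/-!
Since `g` has absolutely summable Fourier coefficients, uniqueness of Fourier coefficients in `L¹`
makes `g` a.e. equal to its Fourier series, so the coefficients of `f g` are the convolution
of those of `f` and `g`. On the side of sequences, the one-sided weight `w`, extended by zero to
`ℤ`, satisfies `w (m + n) ≤ D (w m + w n)`: one of `m`, `n` lies on the same half-line as `m + n`
and is at least half as large. Hence `(a * b) w ≤ D ((a w) * b + a * (b w))` for convolutions, and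
Young's inequality `ℓ¹ * ℓ^r ⊆ ℓ^r` bounds both terms.
-/

open Set

section EllNorm

variable {ι : Type*} {r : ℝ}

/-- The `ℓ^r` norm `(∑ i, a i ^ r) ^ (1 / r)` of a family in `[0, ∞]`, for a real exponent `r`. -/
noncomputable def ellNorm (r : ℝ) (a : ι → ℝ≥0∞) : ℝ≥0∞ := (∑' i, a i ^ r) ^ (1 / r)

lemma ellNorm_mono (hr : 0 ≤ r) {a b : ι → ℝ≥0∞} (hab : a ≤ b) : ellNorm r a ≤ ellNorm r b := by
  unfold ellNorm
  gcongr with i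
  exact hab i

lemma ellNorm_const_mul (hr : 0 < r) (c : ℝ≥0∞) (a : ι → ℝ≥0∞) :
    ellNorm r (fun i => c * a i) = c * ellNorm r a := by
  simp only [ellNorm, ENNReal.mul_rpow_of_nonneg _ _ hr.le, ENNReal.tsum_mul_left]
  rw [ENNReal.mul_rpow_of_nonneg _ _ (by positivity), one_div, ENNReal.rpow_rpow_inv hr.ne']

lemma ellNorm_add_le (hr : 1 ≤ r) (a b : ι → ℝ≥0∞) :
    ellNorm r (a + b) ≤ ellNorm r a + ellNorm r b := by
  let _ : MeasurableSpace ι := ⊤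
  simpa only [ellNorm, lintegral_count] using ENNReal.lintegral_Lp_add_le (μ := Measure.count)
    (measurable_from_top (f := a)).aemeasurable (measurable_from_top (f := b)).aemeasurable hr

lemma tsum_mul_rpow_le (hr : 1 ≤ r) (w f : ι → ℝ≥0∞) :
    (∑' i, w i * f i) ^ r ≤ (∑' i, w i) ^ (r - 1) * ∑' i, w i * f i ^ r := by
  have hr0 : 0 < r := by positivity
  have hr1 : 0 ≤ 1 - r⁻¹ := sub_nonneg.2 (inv_le_one_of_one_le₀ hr)
  have holder : ∑' i, w i * f i ≤ (∑' i, w i) ^ (1 - r⁻¹) * (∑' i, w i * f i ^ r) ^ r⁻¹ := by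
    rw [ENNReal.tsum_eq_iSup_sum]
    refine iSup_le fun s => (ENNReal.inner_le_weight_mul_Lp_of_nonneg s hr w f).trans ?_
    gcongr <;> exact ENNReal.sum_le_tsum s
  refine (ENNReal.rpow_le_rpow holder hr0.le).trans_eq ?_
  rw [ENNReal.mul_rpow_of_nonneg _ _ hr0.le, ENNReal.rpow_inv_rpow hr0.ne', ← ENNReal.rpow_mul,
    sub_mul, inv_mul_cancel₀ hr0.ne', one_mul]

end EllNorm

section DiscreteConv

variable {G : Type*} {r : ℝ}

/-- The convolution `n ↦ ∑ k, a k * b (n - k)` of two `[0, ∞]`-valued functions on a discrete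
group; it dominates the Fourier coefficients of a product. -/
noncomputable def discreteConv [AddGroup G] (a b : G → ℝ≥0∞) (n : G) : ℝ≥0∞ :=
  ∑' k, a k * b (n - k)

lemma discreteConv_comm [AddCommGroup G] (a b : G → ℝ≥0∞) :
    discreteConv a b = discreteConv b a := by
  ext n
  rw [discreteConv, ← (Equiv.subLeft n).tsum_eq]
  simp [discreteConv, mul_comm]

lemma tsum_discreteConv [AddGroup G] (a b : G → ℝ≥0∞) :
    ∑' n, discreteConv a b n = (∑' n, a n) * ∑' n, b n := by
  unfold discreteConv
  rw [ENNReal.tsum_comm, ← ENNReal.tsum_mul_right]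
  refine tsum_congr fun k => ?_
  rw [ENNReal.tsum_mul_left, ← (Equiv.subRight k).tsum_eq b]
  rfl

lemma ellNorm_discreteConv_le [AddGroup G] (hr : 1 ≤ r) (a b : G → ℝ≥0∞) :
    ellNorm r (discreteConv a b) ≤ (∑' k, a k) * ellNorm r b := by
  have hr0 : 0 < r := by positivity
  -- Jensen's inequality moves the power onto `b`, which reduces the claim to the case `r = 1`.
  have sum_le : ∑' n, discreteConv a b n ^ r ≤ (∑' k, a k) ^ r * ∑' n, b n ^ r := calc
    _ ≤ ∑' n, (∑' k, a k) ^ (r - 1) * discreteConv a (fun m => b m ^ r) n :=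
      ENNReal.tsum_le_tsum fun n => tsum_mul_rpow_le hr a _
    _ = (∑' k, a k) ^ (r - 1) * (∑' k, a k) ^ (1 : ℝ) * ∑' n, b n ^ r := by
      rw [ENNReal.tsum_mul_left, tsum_discreteConv, ENNReal.rpow_one,
        mul_assoc]
    _ = (∑' k, a k) ^ r * ∑' n, b n ^ r := by
      rw [← ENNReal.rpow_add_of_nonneg _ _ (sub_nonneg.2 hr) zero_le_one, sub_add_cancel]
  refine (ENNReal.rpow_le_rpow sum_le (by positivity)).trans_eq ?_
  rw [ENNReal.mul_rpow_of_nonneg _ _ (by positivity), one_div, ENNReal.rpow_rpow_inv hr0.ne',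
    ellNorm, one_div]

variable [AddCommGroup G] {w : G → ℝ≥0∞} {D : ℝ≥0∞}

lemma discreteConv_mul_weight_le (hw : ∀ m n, w (m + n) ≤ D * (w m + w n)) (a b : G → ℝ≥0∞)
    (n : G) :
    discreteConv a b n * w n ≤ D * (discreteConv (a * w) b n + discreteConv a (b * w) n) := by
  simp only [discreteConv]
  rw [← ENNReal.tsum_add, ← ENNReal.tsum_mul_left, ← ENNReal.tsum_mul_right]
  refine ENNReal.tsum_le_tsum fun k => ?_
  have hwn : w n ≤ D * (w k + w (n - k)) := by simpa using hw k (n - k)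
  calc a k * b (n - k) * w n
      ≤ a k * b (n - k) * (D * (w k + w (n - k))) := by gcongr
    _ = D * ((a * w) k * b (n - k) + a k * (b * w) (n - k)) := by
      simp only [Pi.mul_apply]
      ring

lemma ellNorm_discreteConv_mul_weight_le (hr : 1 ≤ r) (hw : ∀ m n, w (m + n) ≤ D * (w m + w n))
    (a b : G → ℝ≥0∞) :
    ellNorm r (discreteConv a b * w) ≤
      D * ((∑' n, b n) * ellNorm r (a * w) + (∑' n, a n) * ellNorm r (b * w)) := by
  have hr0 : 0 < r := by positivity
  calc ellNorm r (discreteConv a b * w)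
      ≤ ellNorm r fun n => D * (discreteConv b (a * w) + discreteConv a (b * w)) n := by
        rw [discreteConv_comm b]
        exact ellNorm_mono hr0.le (discreteConv_mul_weight_le hw a b)
    _ = D * ellNorm r (discreteConv b (a * w) + discreteConv a (b * w)) :=
        ellNorm_const_mul hr0 _ _
    _ ≤ D * (ellNorm r (discreteConv b (a * w)) + ellNorm r (discreteConv a (b * w))) := by
        gcongr
        exact ellNorm_add_le hr _ _
    _ ≤ _ := by gcongr <;> exact ellNorm_discreteConv_le hr _ _

lemma ellNorm_mul_weight_le_of_le_discreteConv (hr : 1 ≤ r)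
    (hw : ∀ m n, w (m + n) ≤ D * (w m + w n)) {a b c : G → ℝ≥0∞} (hc : c ≤ discreteConv a b) :
    ellNorm r (c * w) ≤
      D * ((∑' n, a n + ellNorm r (a * w)) * (∑' n, b n + ellNorm r (b * w))) := by
  refine (ellNorm_mono (zero_le_one.trans hr) (by gcongr)).trans
    ((ellNorm_discreteConv_mul_weight_le hr hw a b).trans ?_)
  gcongr
  calc (∑' n, b n) * ellNorm r (a * w) + (∑' n, a n) * ellNorm r (b * w)
      ≤ ellNorm r (a * w) * (∑' n, b n + ellNorm r (b * w)) +
          (∑' n, a n) * (∑' n, b n + ellNorm r (b * w)) := by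
        rw [mul_comm]
        gcongr
        · exact le_self_add
        · exact le_add_self
    _ = (∑' n, a n + ellNorm r (a * w)) * (∑' n, b n + ellNorm r (b * w)) := by ring

end DiscreteConv

section PowerWeight

/-- The power weight `(|n| + 1) ^ β` on `S`, extended by zero to `ℤ`. Taking for `S` a half-line
turns each one-sided sum of `BSnorm` into a weighted `ℓ^r` norm over the group `ℤ`. -/
noncomputable def powerWeight (S : Set ℤ) (β : ℝ) : ℤ → ℝ≥0∞ :=
  S.indicator fun n => ((n.natAbs : ℝ≥0∞) + 1) ^ β

lemma powerWeight_le_of_natAbs_le {S : Set ℤ} {β : ℝ} (hβ : 0 ≤ β) {m n : ℤ} (hm : m ∈ S)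
    (hn : n.natAbs ≤ 2 * m.natAbs) : powerWeight S β n ≤ 2 ^ β * powerWeight S β m := by
  have hnm : (n.natAbs : ℝ≥0∞) + 1 ≤ 2 * (m.natAbs + 1) := by
    exact_mod_cast (by omega : n.natAbs + 1 ≤ 2 * (m.natAbs + 1))
  calc powerWeight S β n ≤ ((n.natAbs : ℝ≥0∞) + 1) ^ β := indicator_le_self _ _ _
    _ ≤ (2 * (m.natAbs + 1)) ^ β := by gcongr
    _ = 2 ^ β * powerWeight S β m := by
      rw [ENNReal.mul_rpow_of_nonneg _ _ hβ, powerWeight, indicator_of_mem hm]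

lemma powerWeight_add_le {S : Set ℤ} {β : ℝ} (hβ : 0 ≤ β)
    (hS : ∀ m n, m + n ∈ S → (m ∈ S ∧ (m + n).natAbs ≤ 2 * m.natAbs) ∨
      (n ∈ S ∧ (m + n).natAbs ≤ 2 * n.natAbs)) (m n : ℤ) :
    powerWeight S β (m + n) ≤ 2 ^ β * (powerWeight S β m + powerWeight S β n) := by
  by_cases hmn : m + n ∈ S
  · rw [mul_add]
    rcases hS m n hmn with ⟨hm, hle⟩ | ⟨hn, hle⟩
    · exact (powerWeight_le_of_natAbs_le hβ hm hle).trans le_self_add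
    · exact (powerWeight_le_of_natAbs_le hβ hn hle).trans le_add_self
  · simp [powerWeight, hmn]

lemma powerWeight_Ici_add_le {β : ℝ} (hβ : 0 ≤ β) (m n : ℤ) :
    powerWeight (Ici 0) β (m + n) ≤
      2 ^ β * (powerWeight (Ici 0) β m + powerWeight (Ici 0) β n) := by
  refine powerWeight_add_le hβ (fun m n hmn => ?_) m n
  simp only [mem_Ici] at hmn ⊢
  omega

lemma powerWeight_Iio_add_le {β : ℝ} (hβ : 0 ≤ β) (m n : ℤ) :
    powerWeight (Iio 0) β (m + n) ≤
      2 ^ β * (powerWeight (Iio 0) β m + powerWeight (Iio 0) β n) := by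
  refine powerWeight_add_le hβ (fun m n hmn => ?_) m n
  simp only [mem_Iio] at hmn ⊢
  omega

lemma ellNorm_mul_powerWeight_range {ι : Type*} {r : ℝ} (hr : 0 < r) (β : ℝ) (a : ℤ → ℝ≥0∞)
    {e : ι → ℤ} (he : Function.Injective e) :
    ellNorm r (a * powerWeight (range e) β) =
      (∑' i, a (e i) ^ r * (((e i).natAbs : ℝ≥0∞) + 1) ^ (β * r)) ^ (1 / r) := by
  have hsupp : (Function.support fun n => (a * powerWeight (range e) β) n ^ r) ⊆ range e := by
    intro n hn
    by_contra hne
    simp [powerWeight, hne, hr] at hn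
  rw [ellNorm, ← he.tsum_eq hsupp]
  simp [powerWeight, ENNReal.mul_rpow_of_nonneg _ _ hr.le, ENNReal.rpow_mul]

end PowerWeight

section BSnorm

variable {p r : ℝ}

lemma range_neg_natCast_add_one : range (fun k : ℕ => -((k : ℤ) + 1)) = Iio 0 := by
  ext n
  simp only [mem_range, mem_Iio]
  exact ⟨by rintro ⟨k, rfl⟩; omega, fun hn => ⟨n.natAbs - 1, by omega⟩⟩

lemma range_natCast_int : range (fun k : ℕ => (k : ℤ)) = Ici 0 := by
  ext n
  simp only [mem_range, mem_Ici]
  exact ⟨by rintro ⟨k, rfl⟩; omega, fun hn => ⟨n.natAbs, by omega⟩⟩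

lemma BSnorm_eq_ellNorm (hp : 0 < p) (hr : 0 < r) (α β : ℝ) (F : ℤ → ℂ) :
    BSnorm p r α β F = ∑' n, ‖F n‖ₑ + ellNorm p ((‖F ·‖ₑ) * powerWeight (Iio 0) α) +
      ellNorm r ((‖F ·‖ₑ) * powerWeight (Ici 0) β) := by
  have natAbs_neg_succ (k : ℕ) : (((-((k : ℤ) + 1)).natAbs : ℝ≥0∞) + 1) = k + 2 := by
    rw [show (-((k : ℤ) + 1)).natAbs = k + 1 by omega]
    push_cast
    rw [add_assoc, one_add_one_eq_two]
  rw [← range_neg_natCast_add_one, ← range_natCast_int,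
    ellNorm_mul_powerWeight_range hp _ _ fun k l hkl => by simpa using hkl,
    ellNorm_mul_powerWeight_range hr _ _ Nat.cast_injective]
  simp only [natAbs_neg_succ, Int.natAbs_natCast]
  rfl

lemma tsum_enorm_le_BSnorm (p r α β : ℝ) (F : ℤ → ℂ) : ∑' n, ‖F n‖ₑ ≤ BSnorm p r α β F :=
  le_self_add.trans le_self_add

lemma summable_norm_of_BSnorm_lt_top {α β : ℝ} {F : ℤ → ℂ} (hF : BSnorm p r α β F < ⊤) :
    Summable fun n => ‖F n‖ :=
  NNReal.summable_coe.2 <| ENNReal.tsum_coe_ne_top_iff_summable.1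
    ((tsum_enorm_le_BSnorm p r α β F).trans_lt hF).ne

lemma BSnorm_le_of_enorm_le_discreteConv {α β : ℝ} (hp : 1 ≤ p) (hr : 1 ≤ r) (hα : 0 ≤ α)
    (hβ : 0 ≤ β) {F G H : ℤ → ℂ} (hH : (‖H ·‖ₑ) ≤ discreteConv (‖F ·‖ₑ) (‖G ·‖ₑ)) :
    BSnorm p r α β H ≤ (1 + 2 ^ α + 2 ^ β) * BSnorm p r α β F * BSnorm p r α β G := by
  have norm_eq := BSnorm_eq_ellNorm (zero_lt_one.trans_le hp) (zero_lt_one.trans_le hr) α β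
  have neg_part_le (K : ℤ → ℂ) : ∑' n, ‖K n‖ₑ + ellNorm p ((‖K ·‖ₑ) * powerWeight (Iio 0) α) ≤
      BSnorm p r α β K := (norm_eq K).symm ▸ le_self_add
  have nonneg_part_le (K : ℤ → ℂ) : ∑' n, ‖K n‖ₑ + ellNorm r ((‖K ·‖ₑ) * powerWeight (Ici 0) β) ≤
      BSnorm p r α β K := by
    rw [norm_eq K]
    gcongr
    exact le_self_add
  calc BSnorm p r α β H
      ≤ BSnorm p r α β F * BSnorm p r α β G + 2 ^ α * (BSnorm p r α β F * BSnorm p r α β G) +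
          2 ^ β * (BSnorm p r α β F * BSnorm p r α β G) := by
        rw [norm_eq H]
        gcongr ?_ + ?_ + ?_
        · refine (ENNReal.tsum_le_tsum hH).trans ?_
          rw [tsum_discreteConv]
          gcongr <;> exact tsum_enorm_le_BSnorm ..
        · refine (ellNorm_mul_weight_le_of_le_discreteConv hp
            (powerWeight_Iio_add_le hα) hH).trans ?_
          gcongr <;> exact neg_part_le _
        · refine (ellNorm_mul_weight_le_of_le_discreteConv hr
            (powerWeight_Ici_add_le hβ) hH).trans ?_
          gcongr <;> exact nonneg_part_le _
    _ = (1 + 2 ^ α + 2 ^ β) * BSnorm p r α β F * BSnorm p r α β G := by ring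

end BSnorm

section Fourier

open AddCircle

variable {E : Type*} [NormedAddCommGroup E] [CompleteSpace E]

lemma norm_fourier_apply {T : ℝ} (n : ℤ) (t : AddCircle T) : ‖fourier n t‖ = 1 :=
  Circle.norm_coe _

lemma continuous_tsum_fourier_smul [NormedSpace ℂ E] {T : ℝ} {c : ℤ → E}
    (hc : Summable fun k => ‖c k‖) :
    Continuous fun t : AddCircle T => ∑' k, fourier k t • c k :=
  continuous_tsum (fun k => by fun_prop) hc fun k t => by
    rw [norm_smul, norm_fourier_apply, one_mul]

lemma ae_eq_zero_of_forall_integral_boundedContinuous_smul_eq_zero [NormedSpace ℝ E] {X : Type*}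
    [TopologicalSpace X] [MeasurableSpace X] [BorelSpace X] [HasOuterApproxClosed X]
    {μ : Measure X} {h : X → E} (hh : Integrable h μ)
    (h0 : ∀ φ : BoundedContinuousFunction X ℝ≥0, ∫ x, (φ x : ℝ) • h x ∂μ = 0) :
    h =ᵐ[μ] 0 := by
  refine ae_eq_zero_of_forall_setIntegral_isClosed_eq_zero hh fun s hs => ?_
  have tendsto_setIntegral : Filter.Tendsto (fun n => ∫ x, (hs.apprSeq n x : ℝ) • h x ∂μ)
      Filter.atTop (nhds (∫ x, s.indicator h x ∂μ)) := by
    refine tendsto_integral_of_dominated_convergence (fun x => ‖h x‖) (fun n => ?_) hh.norm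
      (fun n => ?_) ?_
    · exact (NNReal.continuous_coe.comp (hs.apprSeq n).continuous).aestronglyMeasurable.smul hh.1
    · filter_upwards with x
      rw [norm_smul, NNReal.norm_eq]
      exact mul_le_of_le_one_left (norm_nonneg _)
        (HasOuterApproxClosed.apprSeq_apply_le_one hs n x)
    · filter_upwards with x
      have hx := tendsto_pi_nhds.1 (HasOuterApproxClosed.tendsto_apprSeq hs) x
      convert! (NNReal.tendsto_coe.2 hx).smul_const (h x) using 2
      by_cases hxs : x ∈ s <;> simp [hxs]
  rw [← integral_indicator hs.measurableSet]
  refine tendsto_nhds_unique tendsto_setIntegral ?_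
  simp only [h0, tendsto_const_nhds]

variable [NormedSpace ℂ E] {T : ℝ} [Fact (0 < T)]

-- `φ ↦ ∫ φ • h` is continuous and vanishes on trigonometric polynomials, which are dense.
lemma integral_continuousMap_smul_eq_zero_of_fourierCoeff_eq_zero {h : AddCircle T → E}
    (hh : Integrable h haarAddCircle) (h0 : fourierCoeff h = 0) (φ : C(AddCircle T, ℂ)) :
    ∫ t, φ t • h t ∂haarAddCircle = 0 := by
  let pairing : C(AddCircle T, ℂ) →L[ℂ] E :=
    ((ContinuousLinearMap.lsmul ℂ ℂ).lpPairing haarAddCircle ∞ 1).flip (hh.toL1 h) ∘L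
      ContinuousMap.toLp ∞ haarAddCircle ℂ
  have pairing_apply (ψ : C(AddCircle T, ℂ)) :
      pairing ψ = ∫ t, ψ t • h t ∂haarAddCircle := by
    refine (ContinuousLinearMap.lpPairing_eq_integral _ _ _).trans (integral_congr_ae ?_)
    filter_upwards [ContinuousMap.coeFn_toLp haarAddCircle (p := ∞) (𝕜 := ℂ) ψ, hh.coeFn_toL1]
      with t hψ ht
    simp only [ContinuousLinearMap.coe_coe, hψ, ht, ContinuousLinearMap.lsmul_apply]
  have span_le_ker : Submodule.span ℂ (range (@fourier T)) ≤ pairing.ker := by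
    rw [Submodule.span_le]
    rintro _ ⟨n, rfl⟩
    simpa [pairing_apply, fourierCoeff] using congrFun h0 (-n)
  have top_le_ker := Submodule.topologicalClosure_minimal _ span_le_ker pairing.isClosed_ker
  rw [span_fourier_closure_eq_top] at top_le_ker
  rw [← pairing_apply]
  exact top_le_ker Submodule.mem_top

lemma ae_eq_zero_of_fourierCoeff_eq_zero {h : AddCircle T → E} (hh : Integrable h haarAddCircle)
    (h0 : fourierCoeff h = 0) : h =ᵐ[haarAddCircle] 0 :=
  ae_eq_zero_of_forall_integral_boundedContinuous_smul_eq_zero hh fun φ =>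
    integral_continuousMap_smul_eq_zero_of_fourierCoeff_eq_zero hh h0
      ⟨fun t => ((φ t : ℝ) : ℂ), by fun_prop⟩

lemma ae_eq_of_fourierCoeff_eq {f g : AddCircle T → E} (hf : Integrable f haarAddCircle)
    (hg : Integrable g haarAddCircle) (hfg : fourierCoeff f = fourierCoeff g) :
    f =ᵐ[haarAddCircle] g := by
  have fourierCoeff_sub : fourierCoeff (f - g) = 0 := by
    rw [sub_eq_add_neg, ← neg_one_smul ℂ g, fourierCoeff.add hf (hg.smul _), hfg]
    ext n
    rw [Pi.add_apply, fourierCoeff.const_smul, neg_one_smul, add_neg_cancel, Pi.zero_apply]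
  filter_upwards [ae_eq_zero_of_fourierCoeff_eq_zero (hf.sub hg) fourierCoeff_sub] with t ht
  exact sub_eq_zero.1 ht

lemma hasSum_fourierCoeff_smul_tsum_fourier {f : AddCircle T → ℂ}
    (hf : Integrable f haarAddCircle) {c : ℤ → E} (hc : Summable fun k => ‖c k‖) (n : ℤ) :
    HasSum (fun k => fourierCoeff f (n - k) • c k)
      (fourierCoeff (fun t => f t • ∑' k, fourier k t • c k) n) := by
  have hint (k : ℤ) :
      Integrable (fun t => (fourier (-(n - k)) t • f t) • c k) haarAddCircle :=
    (hf.fourier_smul _).smul_const _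
  have summable_integral_norm :
      Summable fun k => ∫ t, ‖(fourier (-(n - k)) t • f t) • c k‖ ∂haarAddCircle := by
    simp only [norm_smul, norm_fourier_apply, one_mul, integral_mul_const]
    exact hc.mul_left _
  have tsum_term (t : AddCircle T) : ∑' k, (fourier (-(n - k)) t • f t) • c k =
      fourier (-n) t • f t • ∑' k, fourier k t • c k := by
    have hsum : Summable fun k => fourier k t • c k :=
      .of_norm (by simpa only [norm_smul, norm_fourier_apply, one_mul] using hc)
    rw [← hsum.tsum_const_smul, ← (hsum.const_smul _).tsum_const_smul]
    refine tsum_congr fun k => ?_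
    rw [show -(n - k) = -n + k by ring, fourier_add, smul_smul, smul_smul, smul_eq_mul]
    congr 1
    ring
  have hasSum_integral := hasSum_integral_of_summable_integral_norm hint summable_integral_norm
  simp only [integral_smul_const, tsum_term] at hasSum_integral
  exact hasSum_integral

lemma fourierCoeff_tsum_fourier_smul {c : ℤ → E} (hc : Summable fun k => ‖c k‖) :
    fourierCoeff (fun t : AddCircle T => ∑' k, fourier k t • c k) = c := by
  ext n
  have hasSum_coeff := hasSum_fourierCoeff_smul_tsum_fourier (T := T) (f := fourier 0)
    ((fourier 0).continuous.integrable_of_hasCompactSupport (.of_compactSpace _)) hc n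
  simp only [fourierCoeff_fourier, fourier_zero, one_smul] at hasSum_coeff
  refine hasSum_coeff.unique ?_
  have hasSum_n := hasSum_single (f := fun k => (Pi.single 0 1 : ℤ → ℂ) (n - k) • c k) n
    fun k hk => by rw [Pi.single_eq_of_ne (sub_ne_zero.2 hk.symm), zero_smul]
  simpa only [sub_self, Pi.single_eq_same, one_smul] using hasSum_n

lemma ae_eq_tsum_fourierCoeff {g : AddCircle T → E} (hg : Integrable g haarAddCircle)
    (hc : Summable fun k => ‖fourierCoeff g k‖) :
    g =ᵐ[haarAddCircle] fun t => ∑' k, fourier k t • fourierCoeff g k :=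
  ae_eq_of_fourierCoeff_eq hg
    ((continuous_tsum_fourier_smul hc).integrable_of_hasCompactSupport (.of_compactSpace _))
    (fourierCoeff_tsum_fourier_smul hc).symm

lemma hasSum_fourierCoeff_smul {f : AddCircle T → ℂ} {g : AddCircle T → E}
    (hf : Integrable f haarAddCircle) (hg : Integrable g haarAddCircle)
    (hc : Summable fun k => ‖fourierCoeff g k‖) (n : ℤ) :
    HasSum (fun k => fourierCoeff f (n - k) • fourierCoeff g k) (fourierCoeff (f • g) n) := by
  have smul_ae_eq : f • g =ᵐ[haarAddCircle] fun t => f t • ∑' k, fourier k t • fourierCoeff g k :=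
    (Filter.EventuallyEq.refl _ f).smul (ae_eq_tsum_fourierCoeff hg hc)
  rw [fourierCoeff_congr_ae smul_ae_eq]
  exact hasSum_fourierCoeff_smul_tsum_fourier hf hc n

lemma enorm_fourierCoeff_smul_le {f : AddCircle T → ℂ} {g : AddCircle T → E}
    (hf : Integrable f haarAddCircle) (hg : Integrable g haarAddCircle)
    (hc : Summable fun k => ‖fourierCoeff g k‖) :
    (‖fourierCoeff (f • g) ·‖ₑ) ≤ discreteConv (‖fourierCoeff f ·‖ₑ) (‖fourierCoeff g ·‖ₑ) := by
  intro n
  rw [discreteConv_comm]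
  beta_reduce
  rw [← (hasSum_fourierCoeff_smul hf hg hc n).tsum_eq]
  refine enorm_tsum_le_tsum_enorm.trans_eq (tsum_congr fun k => ?_)
  rw [enorm_smul, mul_comm]

end Fourier

theorem stmt_8_general (p r α β : ℝ) (hp : 1 ≤ p) (hr : 1 ≤ r) (hα : 0 ≤ α) (hβ : 0 ≤ β) :
    ∃ C : ℝ≥0∞, C < ⊤ ∧
      ∀ (T : ℝ) [Fact (0 < T)] (f g : AddCircle T → ℂ),
        Integrable f AddCircle.haarAddCircle →
        Integrable g AddCircle.haarAddCircle →
        BSnorm p r α β (fourierCoeff g) < ⊤ →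
        BSnorm p r α β (fourierCoeff (f * g))
          ≤ C * BSnorm p r α β (fourierCoeff f) * BSnorm p r α β (fourierCoeff g) :=
  ⟨1 + 2 ^ α + 2 ^ β, by finiteness, fun _ _ _ _ hf hg hNg =>
    BSnorm_le_of_enorm_le_discreteConv hp hr hα hβ
      (enorm_fourierCoeff_smul_le hf hg (summable_norm_of_BSnorm_lt_top hNg))⟩

/-- Böttcher–Silbermann–Horbach theorem: for `1 ≤ p, r < ∞` and
`0 ≤ α, β < ∞`, the set `W ∩ Fℓ^{p,r}_{α,β}` is closed under pointwise
multiplication and its norm satisfies `‖fg‖ ≤ C ‖f‖ ‖g‖` for a constant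
`C` depending only on `p, r, α, β`. -/
theorem stmt_8 (p r α β : ℝ) (hp : 1 ≤ p) (hr : 1 ≤ r) (hα : 0 ≤ α) (hβ : 0 ≤ β) :
    ∃ C : ℝ≥0∞, C < ⊤ ∧
      ∀ f g : AddCircle (2 * Real.pi) → ℂ,
        Integrable f AddCircle.haarAddCircle →
        Integrable g AddCircle.haarAddCircle →
        BSnorm p r α β (fourierCoeff f) < ⊤ →
        BSnorm p r α β (fourierCoeff g) < ⊤ →
        BSnorm p r α β (fourierCoeff (f * g))
          ≤ C * BSnorm p r α β (fourierCoeff f) * BSnorm p r α β (fourierCoeff g) := by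
  obtain ⟨C, hC, hmul⟩ := stmt_8_general p r α β hp hr hα hβ
  exact ⟨C, hC, fun f g hf hg _ hNg => hmul _ f g hf hg hNg⟩
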